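/- Let φ(x,t) = t^p + a(x) t^q with 1 < p < q < ∞, a a nonnegative function in C^{0,α}(ℝⁿ) for some α ∈ (0,1], and assume q/p ≤ 1 + α/n. Let Ω ⊆ ℝⁿ be open and suppose ℝⁿ∖Ω is locally uniformly infimally φ-fat with parameters c_fat > 0 and 0 < r_o ≤ 1. Then there is a constant c = c(n,p,q,c_fat) such that for every z ∈ ℝⁿ∖Ω, every 0 < r < r_o in the p-phase, i.e. with inf_{B(z,r)} a ≤ [a]_{0,α} r^α, and every u ∈ Lip_0(Ω): ⨍_{B(z,r)} φ(x,|u(x)|) dx ≤ c · (1 + [a]_{0,α} · ‖r ∇u‖_{L^p(B(z,r))}^{q−p}) · ⨍_{B(z,r)} |r ∇u(x)|^p dx. -/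

import Mathlib

open MeasureTheory Metric Set

noncomputable section

/-- Euclidean space `ℝⁿ`. -/
abbrev En (n : ℕ) : Type := EuclideanSpace ℝ (Fin n)

/-- Norm of the (a.e. defined, by Rademacher's theorem) gradient of `u` at `x`. -/
def gnorm {n : ℕ} (u : En n → ℝ) (x : En n) : ℝ := ‖fderiv ℝ u x‖

/-- Admissible test functions for the level-`t` capacity of `E` in `O`:
Lipschitz on the closure of `O`, `u ≥ t` on `E`, `u = 0` on `∂O`. -/
def Adm {n : ℕ} (E O : Set (En n)) (t : ℝ) : Set (En n → ℝ) :=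
  {u | (∃ K, LipschitzOnWith K u (closure O)) ∧ (∀ x ∈ E, t ≤ u x) ∧
    ∀ x ∈ frontier O, u x = 0}

/-- Level-`t` variational capacity with integrand `ψ` and normalization `ψm`. -/
def capLevel {n : ℕ} (ψ : En n → ℝ → ℝ) (ψm : ℝ → ℝ)
    (E O : Set (En n)) (t : ℝ) : ℝ :=
  sInf ((fun u => ∫ x in O, ψ x (gnorm u x) / ψm t) '' Adm E O t)

/-- Infimal capacity with integrand `ψ` and normalization `ψm`. -/
def capInfGen {n : ℕ} (ψ : En n → ℝ → ℝ) (ψm : ℝ → ℝ) (E O : Set (En n)) : ℝ :=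
  ⨅ t : Ioi (0 : ℝ), capLevel ψ ψm E O (t : ℝ)

/-- The double-phase integrand `φ(x,t) = t^p + a(x) t^q`. -/
def phi {n : ℕ} (a : En n → ℝ) (p q : ℝ) (x : En n) (t : ℝ) : ℝ :=
  t ^ p + a x * t ^ q

/-- `a_O^- = inf_{x ∈ O} a(x)`. -/
def aInfOn {n : ℕ} (a : En n → ℝ) (O : Set (En n)) : ℝ := sInf (a '' O)

/-- `a_O^+ = sup_{x ∈ O} a(x)`. -/
def aSupOn {n : ℕ} (a : En n → ℝ) (O : Set (En n)) : ℝ := sSup (a '' O)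

/-- `φ_O^-(t) = t^p + a_O^- t^q`. -/
def phiMinus {n : ℕ} (a : En n → ℝ) (p q : ℝ) (O : Set (En n)) (t : ℝ) : ℝ :=
  t ^ p + aInfOn a O * t ^ q

/-- Level-`t` variational capacity for the double-phase integrand. -/
def capPhiLevel {n : ℕ} (a : En n → ℝ) (p q t : ℝ) (E O : Set (En n)) : ℝ :=
  capLevel (phi a p q) (phiMinus a p q O) E O t

/-- Infimal `φ`-capacity. -/
def capPhiInf {n : ℕ} (a : En n → ℝ) (p q : ℝ) (E O : Set (En n)) : ℝ :=
  ⨅ t : Ioi (0 : ℝ), capPhiLevel a p q (t : ℝ) E O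

/-- Variational `p`-capacity. -/
def capP {n : ℕ} (p : ℝ) (E O : Set (En n)) : ℝ :=
  sInf ((fun u => ∫ x in O, gnorm u x ^ p) '' Adm E O 1)

/-- The rescaled set `{x ∈ B̄(0,1/2) : z + r x ∈ E}`. -/
def shiftedSet {n : ℕ} (E : Set (En n)) (z : En n) (r : ℝ) : Set (En n) :=
  {x ∈ closedBall (0 : En n) (1 / 2) | z + r • x ∈ E}

/-- Local uniform infimal `φ`-fatness with parameters `cfat` and `ro`. -/
def LocUnifPhiFat {n : ℕ} (a : En n → ℝ) (p q : ℝ) (E : Set (En n))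
    (cfat ro : ℝ) : Prop :=
  ∀ z ∈ E, ∀ r : ℝ, 0 < r → r < ro →
    cfat ≤ capPhiInf (fun x => a (z + r • x)) p q (shiftedSet E z r) (ball (0 : En n) 1)

/-- Local uniform `p`-fatness with parameters `cfat` and `ro`. -/
def LocUnifPFat {n : ℕ} (p : ℝ) (E : Set (En n)) (cfat ro : ℝ) : Prop :=
  ∀ z ∈ E, ∀ r : ℝ, 0 < r → r < ro →
    cfat ≤ capP p (shiftedSet E z r) (ball (0 : En n) 1)

/-- `Lip_0(Ω)`: Lipschitz functions with compact support contained in `Ω`,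
extended by zero to `ℝⁿ`. -/
def Lip0 {n : ℕ} (Ω : Set (En n)) : Set (En n → ℝ) :=
  {u | (∃ K, LipschitzWith K u) ∧ HasCompactSupport u ∧ tsupport u ⊆ Ω}

/-- Restricted centered maximal operator `M_R f(x) = sup_{0<r<R} ⨍_{B(x,r)} |f|`. -/
def maxOp {n : ℕ} (R : ℝ) (f : En n → ℝ) (x : En n) : ℝ :=
  ⨆ r : Ioo (0 : ℝ) R, ⨍ y in ball x (r : ℝ), |f y|

/-!
Letting the level `t` tend to `0` in the infimal capacity kills the `q`-part of the energy, so
infimal `φ`-fatness implies `p`-fatness with the same parameters. On the unit ball, a Lipschitz `w`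
vanishing on a set `E ⊆ B̄(0,1/2)` of `p`-capacity at least `c` satisfies the Maz'ya inequality
`∫ |w|^s ≤ C (∫ |∇w|^p)^(s/p)`: testing the capacity with `2 (1 - ‖x‖) (1 - w / m)`, where `m` is
the mean of `w`, bounds `|m|^p` by `∫ |∇w|^p`, and the oscillation `w - m` is controlled by the
Sobolev–Poincaré inequality. The latter comes from integrating `∇w` along segments: Minkowski's
inequality in the segment parameter `t` leaves the weight `t^(-d (s/p - 1) / s)`, which is
integrable as soon as `d (s/p - 1) < s`.

Use this with `s = p` and `s = q` after rescaling `B(z,r)` to the unit ball. In the `p`-phase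
`a ≤ 3 A r^α` on `B(z,r)`, and since `n (q/p - 1) ≤ α` and `r ≤ 1` the factor `r^α` is absorbed by
the scaling of `‖r∇u‖_{L^p(B(z,r))}^(q-p)`.
-/

open scoped ENNReal NNReal

section LebesgueIntegral

variable {X Y : Type*} [MeasurableSpace X] [MeasurableSpace Y] {μ : Measure X} {ν : Measure Y}
  {s : ℝ}

theorem ennreal_rpow_sub_one_mul_self (hs : 1 ≤ s) (x : ℝ≥0∞) : x ^ (s - 1) * x = x ^ s := by
  simpa using (ENNReal.rpow_add_of_nonneg (x := x) (s - 1) 1 (by linarith) zero_le_one).symm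

theorem rpow_lintegral_mul_le_mul_lintegral_mul_rpow (hs : 1 ≤ s) {w f : X → ℝ≥0∞}
    (hw : AEMeasurable w μ) (hf : AEMeasurable f μ) :
    (∫⁻ x, w x * f x ∂μ) ^ s ≤ (∫⁻ x, w x ∂μ) ^ (s - 1) * ∫⁻ x, w x * f x ^ s ∂μ := by
  have s_pos : 0 < s := by linarith
  have inv_nonneg : 0 ≤ s⁻¹ := by positivity
  have compl_nonneg : 0 ≤ 1 - s⁻¹ := sub_nonneg.2 (inv_le_one_of_one_le₀ hs)
  have split (x : X) : w x ^ (1 - s⁻¹) * (w x * f x ^ s) ^ s⁻¹ = w x * f x := by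
    rw [ENNReal.mul_rpow_of_nonneg _ _ inv_nonneg, ← ENNReal.rpow_mul, mul_inv_cancel₀ s_pos.ne',
      ENNReal.rpow_one, ← mul_assoc, ← ENNReal.rpow_add_of_nonneg _ _ compl_nonneg inv_nonneg,
      sub_add_cancel, ENNReal.rpow_one]
  have hölder := ENNReal.lintegral_mul_norm_pow_le hw (hw.mul (hf.pow_const s))
    compl_nonneg inv_nonneg (sub_add_cancel 1 s⁻¹)
  simp only [Pi.mul_apply, split] at hölder
  calc (∫⁻ x, w x * f x ∂μ) ^ s
      ≤ ((∫⁻ x, w x ∂μ) ^ (1 - s⁻¹) * (∫⁻ x, w x * f x ^ s ∂μ) ^ s⁻¹) ^ s := by gcongr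
    _ = (∫⁻ x, w x ∂μ) ^ (s - 1) * ∫⁻ x, w x * f x ^ s ∂μ := by
        rw [ENNReal.mul_rpow_of_nonneg _ _ s_pos.le, ← ENNReal.rpow_mul, ← ENNReal.rpow_mul,
          inv_mul_cancel₀ s_pos.ne', ENNReal.rpow_one, sub_mul, inv_mul_cancel₀ s_pos.ne', one_mul]

theorem rpow_lintegral_le_measure_univ_rpow_mul (hs : 1 ≤ s) {f : X → ℝ≥0∞}
    (hf : AEMeasurable f μ) :
    (∫⁻ x, f x ∂μ) ^ s ≤ μ univ ^ (s - 1) * ∫⁻ x, f x ^ s ∂μ := by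
  simpa using rpow_lintegral_mul_le_mul_lintegral_mul_rpow hs aemeasurable_one hf

-- This is Minkowski's integral inequality `‖∫ H(·, y) dy‖ₛ ≤ ∫ ‖H(·, y)‖ₛ dy` with the inner norm
-- replaced by a bound for it.
theorem lintegral_rpow_lintegral_le_of_ae_lintegral_rpow_le [SFinite μ] [SFinite ν] (hs : 1 ≤ s)
    {H : X → Y → ℝ≥0∞} (hH : Measurable (Function.uncurry H)) {w : Y → ℝ≥0∞} (hw : Measurable w)
    (hw_ne_zero : ∀ᵐ y ∂ν, w y ≠ 0) (hw_ne_top : ∀ᵐ y ∂ν, w y ≠ ∞) {B : ℝ≥0∞}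
    (hB : ∀ᵐ y ∂ν, ∫⁻ x, H x y ^ s ∂μ ≤ w y ^ s * B) :
    ∫⁻ x, (∫⁻ y, H x y ∂ν) ^ s ∂μ ≤ (∫⁻ y, w y ∂ν) ^ s * B := by
  have s_nonneg : 0 ≤ s := by linarith
  have hH_left (x : X) : Measurable (H x) := hH.of_uncurry_left
  have hH_right (y : Y) : Measurable fun x => H x y := hH.of_uncurry_right
  have normalized_meas :
      Measurable (Function.uncurry fun x y => w y * ((w y)⁻¹ * H x y) ^ s) := by
    change Measurable fun z : X × Y => w z.2 * ((w z.2)⁻¹ * Function.uncurry H z) ^ s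
    fun_prop
  have inner_meas : Measurable fun x => ∫⁻ y, w y * ((w y)⁻¹ * H x y) ^ s ∂ν :=
    normalized_meas.lintegral_prod_right'
  have jensen (x : X) : (∫⁻ y, H x y ∂ν) ^ s ≤
      (∫⁻ y, w y ∂ν) ^ (s - 1) * ∫⁻ y, w y * ((w y)⁻¹ * H x y) ^ s ∂ν := by
    refine Eq.trans_le ?_ (rpow_lintegral_mul_le_mul_lintegral_mul_rpow hs hw.aemeasurable
      (hw.inv.mul (hH_left x)).aemeasurable)
    congr 1
    refine lintegral_congr_ae ?_
    filter_upwards [hw_ne_zero, hw_ne_top] with y h_zero h_top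
    rw [← mul_assoc, ENNReal.mul_inv_cancel h_zero h_top, one_mul]
  have normalized_le : ∀ᵐ y ∂ν, ∫⁻ x, w y * ((w y)⁻¹ * H x y) ^ s ∂μ ≤ w y * B := by
    filter_upwards [hw_ne_zero, hw_ne_top, hB] with y h_zero h_top hy
    calc ∫⁻ x, w y * ((w y)⁻¹ * H x y) ^ s ∂μ
        = w y * ((w y)⁻¹ ^ s * ∫⁻ x, H x y ^ s ∂μ) := by
          simp_rw [ENNReal.mul_rpow_of_nonneg _ _ s_nonneg]
          rw [lintegral_const_mul _ (by fun_prop), lintegral_const_mul _ (by fun_prop)]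
      _ ≤ w y * ((w y)⁻¹ ^ s * (w y ^ s * B)) := by gcongr
      _ = w y * B := by
          rw [← mul_assoc (_ ^ s), ← ENNReal.mul_rpow_of_nonneg _ _ s_nonneg,
            ENNReal.inv_mul_cancel h_zero h_top, ENNReal.one_rpow, one_mul]
  calc ∫⁻ x, (∫⁻ y, H x y ∂ν) ^ s ∂μ
      ≤ ∫⁻ x, (∫⁻ y, w y ∂ν) ^ (s - 1) * ∫⁻ y, w y * ((w y)⁻¹ * H x y) ^ s ∂ν ∂μ :=
        lintegral_mono jensen
    _ = (∫⁻ y, w y ∂ν) ^ (s - 1) * ∫⁻ y, ∫⁻ x, w y * ((w y)⁻¹ * H x y) ^ s ∂μ ∂ν := by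
        rw [lintegral_const_mul _ inner_meas,
          lintegral_lintegral_swap normalized_meas.aemeasurable]
    _ ≤ (∫⁻ y, w y ∂ν) ^ (s - 1) * ∫⁻ y, w y * B ∂ν := by
        gcongr _ * ?_
        exact lintegral_mono_ae normalized_le
    _ = (∫⁻ y, w y ∂ν) ^ s * B := by
        rw [lintegral_mul_const _ hw, ← mul_assoc, ennreal_rpow_sub_one_mul_self hs]

theorem lintegral_Ioo_ofReal_rpow_ne_top {e : ℝ} (he : -1 < e) :
    ∫⁻ t in Ioo (0 : ℝ) 1, ENNReal.ofReal t ^ e ≠ ∞ := by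
  have h_int := (intervalIntegral.intervalIntegrable_rpow' (a := 0) (b := 1) he).1.mono_set
    Ioo_subset_Ioc_self
  rw [setLIntegral_congr_fun measurableSet_Ioo fun t ht => ENNReal.ofReal_rpow_of_pos ht.1]
  exact h_int.lintegral_lt_top.ne

theorem enorm_sub_average_le_laverage {f : X → ℝ} [IsFiniteMeasure μ] [NeZero μ]
    (hf : Integrable f μ) (c : ℝ) : ‖c - ⨍ y, f y ∂μ‖ₑ ≤ ⨍⁻ y, ‖c - f y‖ₑ ∂μ := by
  have : c - ⨍ y, f y ∂μ = ⨍ y, (c - f y) ∂μ := by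
    rw [average, average, integral_sub (integrable_const c) hf.to_average, integral_const,
      probReal_univ, one_smul]
  rw [this]
  exact enorm_integral_le_lintegral_enorm _

theorem integral_rpow_eq_toReal_lintegral_enorm_rpow {f : X → ℝ} (hf : AEStronglyMeasurable f μ)
    (hf_nonneg : ∀ x, 0 ≤ f x) (hs : 0 ≤ s) :
    ∫ x, f x ^ s ∂μ = (∫⁻ x, ‖f x‖ₑ ^ s ∂μ).toReal := by
  rw [integral_eq_lintegral_of_nonneg_ae
    (Filter.Eventually.of_forall fun x => Real.rpow_nonneg (hf_nonneg x) s)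
    (hf.aemeasurable.pow_const s).aestronglyMeasurable]
  simp only [Real.enorm_eq_ofReal (hf_nonneg _), ENNReal.ofReal_rpow_of_nonneg (hf_nonneg _) hs]

end LebesgueIntegral

section Segments

variable {E : Type*} [NormedAddCommGroup E] [NormedSpace ℝ E] [FiniteDimensional ℝ E]
  [MeasurableSpace E] [BorelSpace E] {μ : Measure E} [μ.IsAddHaarMeasure]
  {S : Set E} {G g : E → ℝ≥0∞} {t : ℝ}

theorem measurable_uncurry_comp_lineMap (hG : Measurable G) (t : ℝ) :
    Measurable (Function.uncurry fun x y => G (AffineMap.lineMap x y t)) :=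
  hG.comp (continuous_fst.lineMap continuous_snd continuous_const).measurable

theorem lintegral_comp_lineMap (ht : 0 < t) (x : E) (G : E → ℝ≥0∞) :
    ∫⁻ y, G (AffineMap.lineMap x y t) ∂μ =
      (ENNReal.ofReal t ^ Module.finrank ℝ E)⁻¹ * ∫⁻ y, G y ∂μ := by
  have translate_dilate (y : E) : AffineMap.lineMap x y t = (x - t • x) + t • y := by
    rw [AffineMap.lineMap_apply_module']
    module
  have dilate : ∫⁻ y, G ((x - t • x) + t • y) ∂μ =
      ∫⁻ y, G ((x - t • x) + y) ∂(μ.map fun y => t • y) :=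
    (lintegral_map_equiv (fun y => G ((x - t • x) + y))
      (Homeomorph.smulOfNeZero t ht.ne').toMeasurableEquiv).symm
  simp_rw [translate_dilate]
  rw [dilate, Measure.map_addHaar_smul _ ht.ne', lintegral_smul_measure,
    lintegral_add_left_eq_self G, abs_of_pos (by positivity),
    ENNReal.ofReal_inv_of_pos (by positivity), ENNReal.ofReal_pow ht.le, smul_eq_mul]

theorem setLIntegral_comp_lineMap_le (hS : Convex ℝ S) (hS_meas : MeasurableSet S)
    (ht : t ∈ Ioo (0 : ℝ) 1) {x : E} (hx : x ∈ S) (G : E → ℝ≥0∞) :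
    ∫⁻ y in S, G (AffineMap.lineMap x y t) ∂μ ≤
      (ENNReal.ofReal t ^ Module.finrank ℝ E)⁻¹ * ∫⁻ y in S, G y ∂μ := by
  rw [← lintegral_indicator hS_meas, ← lintegral_indicator hS_meas,
    ← lintegral_comp_lineMap ht.1 x]
  refine lintegral_mono fun y => ?_
  by_cases hy : y ∈ S
  · rw [indicator_of_mem hy, indicator_of_mem (hS.lineMap_mem hx hy (Ioo_subset_Icc_self ht))]
  · rw [indicator_of_notMem hy]
    exact zero_le

-- Integrating first over the endpoint nearer to the evaluation point costs a Jacobian of at most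
-- `2 ^ d`, uniformly in `t`.
theorem setLIntegral_setLIntegral_comp_lineMap_le (hS : Convex ℝ S) (hS_meas : MeasurableSet S)
    (ht : t ∈ Ioo (0 : ℝ) 1) (hG : Measurable G) :
    ∫⁻ x in S, ∫⁻ y in S, G (AffineMap.lineMap x y t) ∂μ ∂μ ≤
      2 ^ Module.finrank ℝ E * μ S * ∫⁻ y in S, G y ∂μ := by
  have inner_le {s : ℝ} (hs : s ∈ Ico (1 / 2 : ℝ) 1) {x : E} (hx : x ∈ S) :
      ∫⁻ y in S, G (AffineMap.lineMap x y s) ∂μ ≤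
        2 ^ Module.finrank ℝ E * ∫⁻ y in S, G y ∂μ := by
    have s_mem : s ∈ Ioo (0 : ℝ) 1 := ⟨one_half_pos.trans_le hs.1, hs.2⟩
    refine (setLIntegral_comp_lineMap_le hS hS_meas s_mem hx G).trans ?_
    have inv_le_two : (ENNReal.ofReal s)⁻¹ ≤ 2 := by
      rw [ENNReal.inv_le_iff_inv_le, ← ENNReal.ofReal_ofNat 2,
        ← ENNReal.ofReal_inv_of_pos two_pos]
      exact ENNReal.ofReal_le_ofReal (by linarith [hs.1])
    rw [ENNReal.inv_pow]
    gcongr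
  have outer_le {F : E → ℝ≥0∞}
      (hF : ∀ x ∈ S, F x ≤ 2 ^ Module.finrank ℝ E * ∫⁻ y in S, G y ∂μ) :
      ∫⁻ x in S, F x ∂μ ≤ 2 ^ Module.finrank ℝ E * μ S * ∫⁻ y in S, G y ∂μ := by
    refine (setLIntegral_mono' hS_meas hF).trans_eq ?_
    rw [setLIntegral_const, mul_right_comm]
  rcases le_total (1 / 2) t with h | h
  · exact outer_le fun x hx => inner_le ⟨h, ht.2⟩ hx
  · rw [lintegral_lintegral_swap (measurable_uncurry_comp_lineMap hG t).aemeasurable]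
    refine outer_le fun y hy => ?_
    simp_rw [← AffineMap.lineMap_apply_one_sub y]
    exact inner_le ⟨by linarith, by linarith [ht.1]⟩ hy

theorem setLIntegral_rpow_setLIntegral_comp_lineMap_le (hS : Convex ℝ S)
    (hS_meas : MeasurableSet S) (ht : t ∈ Ioo (0 : ℝ) 1) (hG : Measurable G) {κ : ℝ} (hκ : 1 ≤ κ) :
    ∫⁻ x in S, (∫⁻ y in S, G (AffineMap.lineMap x y t) ∂μ) ^ κ ∂μ ≤
      ((ENNReal.ofReal t ^ Module.finrank ℝ E)⁻¹) ^ (κ - 1) *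
        (2 ^ Module.finrank ℝ E * μ S * (∫⁻ y in S, G y ∂μ) ^ κ) := by
  set J := (ENNReal.ofReal t ^ Module.finrank ℝ E)⁻¹
  set N := ∫⁻ y in S, G y ∂μ
  have κ_sub_nonneg : 0 ≤ κ - 1 := by linarith
  have inner_meas : Measurable fun x => ∫⁻ y in S, G (AffineMap.lineMap x y t) ∂μ :=
    (measurable_uncurry_comp_lineMap hG t).lintegral_prod_right'
  calc ∫⁻ x in S, (∫⁻ y in S, G (AffineMap.lineMap x y t) ∂μ) ^ κ ∂μ
      ≤ ∫⁻ x in S, (J * N) ^ (κ - 1) * ∫⁻ y in S, G (AffineMap.lineMap x y t) ∂μ ∂μ := by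
        refine setLIntegral_mono' hS_meas fun x hx => ?_
        rw [← ennreal_rpow_sub_one_mul_self hκ]
        gcongr
        exact setLIntegral_comp_lineMap_le hS hS_meas ht hx G
    _ ≤ (J * N) ^ (κ - 1) * (2 ^ Module.finrank ℝ E * μ S * N) := by
        rw [lintegral_const_mul _ inner_meas]
        gcongr
        exact setLIntegral_setLIntegral_comp_lineMap_le hS hS_meas ht hG
    _ = J ^ (κ - 1) * (2 ^ Module.finrank ℝ E * μ S * N ^ κ) := by
        rw [ENNReal.mul_rpow_of_nonneg _ _ κ_sub_nonneg, ← ennreal_rpow_sub_one_mul_self hκ N]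
        ring

theorem setLIntegral_rpow_setLIntegral_comp_lineMap_le_rpow (hS : Convex ℝ S)
    (hS_meas : MeasurableSet S) (ht : t ∈ Ioo (0 : ℝ) 1) (hg : Measurable g) {p s : ℝ}
    (hp : 1 ≤ p) (hps : p ≤ s) :
    ∫⁻ x in S, (∫⁻ y in S, g (AffineMap.lineMap x y t) ∂μ) ^ s ∂μ ≤
      (ENNReal.ofReal t ^ (-(Module.finrank ℝ E * (s / p - 1) / s))) ^ s *
        ((μ S ^ (p - 1)) ^ (s / p) * (2 ^ Module.finrank ℝ E * μ S *
          (∫⁻ y in S, g y ^ p ∂μ) ^ (s / p))) := by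
  have p_pos : 0 < p := by linarith
  have s_pos : 0 < s := by linarith
  have one_le_ratio : 1 ≤ s / p := (one_le_div p_pos).2 hps
  have jacobian_rpow : ((ENNReal.ofReal t ^ Module.finrank ℝ E)⁻¹) ^ (s / p - 1) =
      (ENNReal.ofReal t ^ (-(Module.finrank ℝ E * (s / p - 1) / s))) ^ s := by
    rw [← ENNReal.rpow_natCast, ← ENNReal.rpow_neg, ← ENNReal.rpow_mul, ← ENNReal.rpow_mul,
      neg_mul, neg_mul, div_mul_cancel₀ _ s_pos.ne']
  have jensen (x : E) : (∫⁻ y in S, g (AffineMap.lineMap x y t) ∂μ) ^ s ≤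
      (μ S ^ (p - 1)) ^ (s / p) * (∫⁻ y in S, g (AffineMap.lineMap x y t) ^ p ∂μ) ^ (s / p) := by
    have h := rpow_lintegral_le_measure_univ_rpow_mul (μ := μ.restrict S) hp
      ((measurable_uncurry_comp_lineMap hg t).of_uncurry_left (x := x)).aemeasurable
    rw [Measure.restrict_apply_univ] at h
    rw [← ENNReal.mul_rpow_of_nonneg _ _ (by linarith), ← mul_div_cancel₀ s p_pos.ne',
      ENNReal.rpow_mul, mul_div_cancel₀ s p_pos.ne']
    gcongr
  have gp_meas : Measurable fun x => ∫⁻ y in S, g (AffineMap.lineMap x y t) ^ p ∂μ :=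
    (measurable_uncurry_comp_lineMap (hg.pow_const p) t).lintegral_prod_right'
  refine (lintegral_mono jensen).trans ?_
  rw [lintegral_const_mul _ (gp_meas.pow_const _), ← jacobian_rpow, mul_left_comm]
  gcongr
  exact setLIntegral_rpow_setLIntegral_comp_lineMap_le hS hS_meas ht (hg.pow_const p) one_le_ratio

theorem exists_setLIntegral_rpow_segments_le (hS : Convex ℝ S) (hS_meas : MeasurableSet S)
    (hS_fin : μ S ≠ ∞) {p s : ℝ} (hp : 1 ≤ p) (hps : p ≤ s)
    (hs : Module.finrank ℝ E * (s / p - 1) < s) :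
    ∃ C ≠ ∞, ∀ g : E → ℝ≥0∞, Measurable g →
      ∫⁻ x in S, (∫⁻ t in Ioo (0 : ℝ) 1, ∫⁻ y in S, g (AffineMap.lineMap x y t) ∂μ) ^ s ∂μ ≤
        C * (∫⁻ y in S, g y ^ p ∂μ) ^ (s / p) := by
  have s_pos : 0 < s := by linarith
  set e := -(Module.finrank ℝ E * (s / p - 1) / s)
  have e_gt : -1 < e := neg_lt_neg ((div_lt_one s_pos).2 hs)
  set M := (μ S ^ (p - 1)) ^ (s / p) * (2 ^ Module.finrank ℝ E * μ S)
  have M_ne_top : M ≠ ∞ := by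
    have : 0 ≤ p - 1 := by linarith
    have : 0 ≤ s / p := by positivity
    finiteness
  refine ⟨(∫⁻ t in Ioo (0 : ℝ) 1, ENNReal.ofReal t ^ e) ^ s * M, ENNReal.mul_ne_top
    (ENNReal.rpow_ne_top_of_nonneg s_pos.le (lintegral_Ioo_ofReal_rpow_ne_top e_gt)) M_ne_top,
    fun g hg => ?_⟩
  have segments_meas : Measurable (Function.uncurry fun (x : E) (t : ℝ) =>
      ∫⁻ y in S, g (AffineMap.lineMap x y t) ∂μ) := by
    have : Measurable fun z : (E × ℝ) × E => g (AffineMap.lineMap z.1.1 z.2 z.1.2) :=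
      hg.comp (Continuous.measurable (f := fun z : (E × ℝ) × E => AffineMap.lineMap z.1.1 z.2 z.1.2)
        (by fun_prop))
    exact this.lintegral_prod_right'
  have fixed_time_le : ∀ᵐ t ∂volume.restrict (Ioo (0 : ℝ) 1),
      ∫⁻ x in S, (∫⁻ y in S, g (AffineMap.lineMap x y t) ∂μ) ^ s ∂μ ≤
        (ENNReal.ofReal t ^ e) ^ s * (M * (∫⁻ y in S, g y ^ p ∂μ) ^ (s / p)) := by
    filter_upwards [ae_restrict_mem measurableSet_Ioo] with t ht
    rw [mul_assoc (_ ^ (s / p))]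
    exact setLIntegral_rpow_setLIntegral_comp_lineMap_le_rpow hS hS_meas ht hg hp hps
  have weight_pos : ∀ᵐ t ∂volume.restrict (Ioo (0 : ℝ) 1), ENNReal.ofReal t ^ e ≠ 0 := by
    filter_upwards [ae_restrict_mem measurableSet_Ioo] with t ht
    exact (ENNReal.rpow_pos (ENNReal.ofReal_pos.2 ht.1) ENNReal.ofReal_ne_top).ne'
  have weight_ne_top : ∀ᵐ t ∂volume.restrict (Ioo (0 : ℝ) 1), ENNReal.ofReal t ^ e ≠ ∞ := by
    filter_upwards [ae_restrict_mem measurableSet_Ioo] with t ht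
    exact ENNReal.rpow_ne_top_of_ne_zero (ENNReal.ofReal_pos.2 ht.1).ne' ENNReal.ofReal_ne_top
  rw [mul_assoc]
  exact lintegral_rpow_lintegral_le_of_ae_lintegral_rpow_le (hp.trans hps) segments_meas
    (by fun_prop) weight_pos weight_ne_top fixed_time_le

theorem quasiMeasurePreserving_lineMap_right (ht : t ≠ 0) (x : E) :
    Measure.QuasiMeasurePreserving (fun y => AffineMap.lineMap x y t) μ μ := by
  have translate_dilate :
      (fun y => AffineMap.lineMap x y t) = (fun y => x - t • x + y) ∘ (fun y => t • y) := by
    funext y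
    rw [AffineMap.lineMap_apply_module', Function.comp_apply]
    module
  rw [translate_dilate]
  exact (measurePreserving_add_left μ _).quasiMeasurePreserving.comp
    (Measure.quasiMeasurePreserving_smul μ ht)

end Segments

section SobolevPoincare

variable {E : Type*} [NormedAddCommGroup E] [NormedSpace ℝ E] [MeasurableSpace E] [BorelSpace E]
  {w : E → ℝ} {K : ℝ≥0}

theorem measurable_uncurry_lineMap (x : E) :
    Measurable (Function.uncurry fun (y : E) (t : ℝ) => AffineMap.lineMap x y t) :=
  Continuous.measurable (by unfold Function.uncurry; fun_prop)

theorem measurable_uncurry_enorm_fderiv_lineMap (w : E → ℝ) (x : E) : Measurable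
    (Function.uncurry fun (y : E) (t : ℝ) => ‖fderiv ℝ w (AffineMap.lineMap x y t)‖ₑ) :=
  (measurable_fderiv ℝ w).enorm.comp (measurable_uncurry_lineMap x)

theorem enorm_sub_le_enorm_mul_lintegral_fderiv_lineMap (hw : LipschitzWith K w) {x y : E}
    (h_diff : ∀ᵐ t ∂volume.restrict (Ioo (0 : ℝ) 1),
      DifferentiableAt ℝ w (AffineMap.lineMap x y t)) :
    ‖w y - w x‖ₑ ≤
      ‖y - x‖ₑ * ∫⁻ t in Ioo (0 : ℝ) 1, ‖fderiv ℝ w (AffineMap.lineMap x y t)‖ₑ := by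
  set f : ℝ → ℝ := w ∘ AffineMap.lineMap x y
  have f_lipschitz : LipschitzWith (K * nndist x y) f := hw.comp (lipschitzWith_lineMap x y)
  have ftc : ∫ t in Ioo (0 : ℝ) 1, deriv f t = w y - w x := by
    rw [← integral_Ioc_eq_integral_Ioo, ← intervalIntegral.integral_of_le zero_le_one,
      f_lipschitz.lipschitzOnWith.absolutelyContinuousOnInterval.integral_deriv_eq_sub]
    simp only [f, Function.comp_apply, AffineMap.lineMap_apply_one, AffineMap.lineMap_apply_zero]
  have fderiv_meas := (measurable_uncurry_enorm_fderiv_lineMap w x).of_uncurry_left (x := y)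
  rw [← ftc, ← lintegral_const_mul _ fderiv_meas]
  refine (enorm_integral_le_lintegral_enorm _).trans (lintegral_mono_ae ?_)
  filter_upwards [h_diff] with t ht
  rw [(ht.hasFDerivAt.comp_hasDerivAt t AffineMap.hasDerivAt_lineMap).deriv, mul_comm]
  exact ContinuousLinearMap.le_opENorm _ _

variable [FiniteDimensional ℝ E] {μ : Measure E} [μ.IsAddHaarMeasure] {S : Set E}

theorem ae_ae_differentiableAt_lineMap (hw : LipschitzWith K w) (x : E) :
    ∀ᵐ y ∂μ, ∀ᵐ t ∂volume.restrict (Ioo (0 : ℝ) 1),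
      DifferentiableAt ℝ w (AffineMap.lineMap x y t) := by
  have diff_meas : MeasurableSet {z : E | DifferentiableAt ℝ w z} :=
    measurableSet_of_differentiableAt ℝ w
  have pairs_meas :
      MeasurableSet {z : E × ℝ | DifferentiableAt ℝ w (AffineMap.lineMap x z.1 z.2)} :=
    measurable_uncurry_lineMap x diff_meas
  refine (Measure.ae_ae_comm pairs_meas).2 ?_
  filter_upwards [ae_restrict_mem measurableSet_Ioo] with t ht
  exact (quasiMeasurePreserving_lineMap_right ht.1.ne' x).ae hw.ae_differentiableAt

theorem enorm_sub_setAverage_le (hS_meas : MeasurableSet S) (hS_bdd : Bornology.IsBounded S)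
    (hS_pos : μ S ≠ 0) (hw : LipschitzWith K w) {x : E} (hx : x ∈ S) :
    ‖w x - ⨍ y in S, w y ∂μ‖ₑ ≤ (μ S)⁻¹ * ediam S *
      ∫⁻ t in Ioo (0 : ℝ) 1, ∫⁻ y in S, ‖fderiv ℝ w (AffineMap.lineMap x y t)‖ₑ ∂μ := by
  have : IsFiniteMeasure (μ.restrict S) := ⟨by simpa using hS_bdd.measure_lt_top⟩
  have : NeZero (μ.restrict S) := ⟨by simpa using hS_pos⟩
  have w_int : IntegrableOn w S μ :=
    (hw.continuous.continuousOn.integrableOn_compact hS_bdd.isCompact_closure).mono_set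
      subset_closure
  have grad_meas := measurable_uncurry_enorm_fderiv_lineMap w x
  have segment_meas :
      Measurable fun y => ∫⁻ t in Ioo (0 : ℝ) 1, ‖fderiv ℝ w (AffineMap.lineMap x y t)‖ₑ :=
    grad_meas.lintegral_prod_right'
  calc ‖w x - ⨍ y in S, w y ∂μ‖ₑ ≤ ⨍⁻ y in S, ‖w x - w y‖ₑ ∂μ :=
        enorm_sub_average_le_laverage w_int (w x)
    _ = (μ S)⁻¹ * ∫⁻ y in S, ‖w x - w y‖ₑ ∂μ := by rw [setLAverage_eq, ENNReal.div_eq_inv_mul]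
    _ ≤ (μ S)⁻¹ * ∫⁻ y in S, ediam S *
          (∫⁻ t in Ioo (0 : ℝ) 1, ‖fderiv ℝ w (AffineMap.lineMap x y t)‖ₑ) ∂μ := by
        gcongr (μ S)⁻¹ * ?_
        refine setLIntegral_mono_ae' hS_meas ?_
        filter_upwards [ae_ae_differentiableAt_lineMap hw x] with y hy hyS
        rw [enorm_sub_rev]
        refine (enorm_sub_le_enorm_mul_lintegral_fderiv_lineMap hw hy).trans ?_
        gcongr
        rw [← edist_eq_enorm_sub]
        exact edist_le_ediam_of_mem hyS hx
    _ = (μ S)⁻¹ * ediam S *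
          ∫⁻ t in Ioo (0 : ℝ) 1, ∫⁻ y in S, ‖fderiv ℝ w (AffineMap.lineMap x y t)‖ₑ ∂μ := by
        rw [lintegral_const_mul _ segment_meas,
          lintegral_lintegral_swap grad_meas.aemeasurable, mul_assoc]

theorem exists_setLIntegral_enorm_sub_setAverage_rpow_le (hS : Convex ℝ S)
    (hS_meas : MeasurableSet S) (hS_bdd : Bornology.IsBounded S) (hS_pos : μ S ≠ 0) {p s : ℝ}
    (hp : 1 ≤ p) (hps : p ≤ s) (hs : Module.finrank ℝ E * (s / p - 1) < s) :
    ∃ C ≠ ∞, ∀ w : E → ℝ, (∃ K, LipschitzWith K w) →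
      ∫⁻ x in S, ‖w x - ⨍ y in S, w y ∂μ‖ₑ ^ s ∂μ ≤
        C * (∫⁻ x in S, ‖fderiv ℝ w x‖ₑ ^ p ∂μ) ^ (s / p) := by
  obtain ⟨C, C_ne_top, segments_le⟩ :=
    exists_setLIntegral_rpow_segments_le hS hS_meas (hS_bdd.measure_lt_top (μ := μ)).ne hp hps hs
  have s_nonneg : 0 ≤ s := by linarith
  have scale_ne_top : ((μ S)⁻¹ * ediam S) ^ s ≠ ∞ := ENNReal.rpow_ne_top_of_nonneg s_nonneg
    (ENNReal.mul_ne_top (ENNReal.inv_ne_top.2 hS_pos) hS_bdd.ediam_ne_top)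
  refine ⟨((μ S)⁻¹ * ediam S) ^ s * C, ENNReal.mul_ne_top scale_ne_top C_ne_top,
    fun w ⟨K, hw⟩ => ?_⟩
  calc ∫⁻ x in S, ‖w x - ⨍ y in S, w y ∂μ‖ₑ ^ s ∂μ
      ≤ ∫⁻ x in S, ((μ S)⁻¹ * ediam S) ^ s * (∫⁻ t in Ioo (0 : ℝ) 1,
          ∫⁻ y in S, ‖fderiv ℝ w (AffineMap.lineMap x y t)‖ₑ ∂μ) ^ s ∂μ := by
        refine setLIntegral_mono' hS_meas fun x hx => ?_
        rw [← ENNReal.mul_rpow_of_nonneg _ _ s_nonneg]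
        gcongr
        exact enorm_sub_setAverage_le hS_meas hS_bdd hS_pos hw hx
    _ ≤ ((μ S)⁻¹ * ediam S) ^ s * C * (∫⁻ x in S, ‖fderiv ℝ w x‖ₑ ^ p ∂μ) ^ (s / p) := by
        rw [lintegral_const_mul' _ _ scale_ne_top, mul_assoc]
        gcongr
        exact segments_le _ (measurable_fderiv ℝ w).enorm

end SobolevPoincare

section Capacity

variable {n : ℕ} {E O : Set (En n)} {b : En n → ℝ} {p q : ℝ}

theorem gnorm_nonneg (u : En n → ℝ) (x : En n) : 0 ≤ gnorm u x := norm_nonneg _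

theorem measurable_gnorm (u : En n → ℝ) : Measurable (gnorm u) := (measurable_fderiv ℝ u).norm

theorem gnorm_const_mul (t : ℝ) (u : En n → ℝ) (x : En n) :
    gnorm (fun y => t * u y) x = |t| * gnorm u x := by
  change ‖fderiv ℝ (t • u) x‖ = |t| * ‖fderiv ℝ u x‖
  rw [fderiv_const_smul_field, Pi.smul_apply, norm_smul, Real.norm_eq_abs]

theorem integrableOn_gnorm_rpow (hO : IsOpen O) (hO_fin : volume O ≠ ∞) {u : En n → ℝ} {K : ℝ≥0}
    (hu : LipschitzOnWith K u O) {s : ℝ} (hs : 0 ≤ s) :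
    IntegrableOn (fun x => gnorm u x ^ s) O := by
  refine Measure.integrableOn_of_bounded hO_fin
    ((measurable_gnorm u).pow_const s).aestronglyMeasurable (M := (K : ℝ) ^ s) ?_
  filter_upwards [ae_restrict_mem hO.measurableSet] with x hx
  have := gnorm_nonneg u x
  rw [Real.norm_of_nonneg (by positivity)]
  gcongr
  exact norm_fderiv_le_of_lipschitzOn ℝ (hO.mem_nhds hx) hu

theorem aInfOn_nonneg (hb : ∀ x, 0 ≤ b x) (O : Set (En n)) : 0 ≤ aInfOn b O :=
  Real.sInf_nonneg (forall_mem_image.2 fun x _ => hb x)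

theorem phi_nonneg (hb : ∀ x, 0 ≤ b x) (x : En n) {t : ℝ} (ht : 0 ≤ t) : 0 ≤ phi b p q x t := by
  have := hb x
  unfold phi
  positivity

theorem phiMinus_pos (hb : ∀ x, 0 ≤ b x) (O : Set (En n)) {t : ℝ} (ht : 0 < t) :
    0 < phiMinus b p q O t := by
  have := aInfOn_nonneg hb O
  unfold phiMinus
  positivity

theorem const_mul_mem_Adm {v : En n → ℝ} (hv : v ∈ Adm E O 1) {t : ℝ} (ht : 0 ≤ t) :
    (fun x => t * v x) ∈ Adm E O t := by
  obtain ⟨⟨K, hK⟩, one_le, v_zero⟩ := hv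
  refine ⟨⟨‖t‖₊ * K, (lipschitzWith_smul t).comp_lipschitzOnWith hK⟩, fun x hx => ?_,
    fun x hx => mul_eq_zero_of_right t (v_zero x hx)⟩
  exact le_mul_of_one_le_right ht (one_le x hx)

theorem capPhiInf_le_setIntegral (hb : ∀ x, 0 ≤ b x) {v : En n → ℝ} (hv : v ∈ Adm E O 1) {t : ℝ}
    (ht : 0 < t) :
    capPhiInf b p q E O ≤ ∫ x in O, phi b p q x (t * gnorm v x) / phiMinus b p q O t := by
  have energy_nonneg {τ : ℝ} (hτ : 0 < τ) (u : En n → ℝ) :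
      0 ≤ ∫ x in O, phi b p q x (gnorm u x) / phiMinus b p q O τ :=
    integral_nonneg fun x =>
      div_nonneg (phi_nonneg hb x (gnorm_nonneg u x)) (phiMinus_pos hb O hτ).le
  have energies_bddBelow {τ : ℝ} (hτ : 0 < τ) : BddBelow
      ((fun u => ∫ x in O, phi b p q x (gnorm u x) / phiMinus b p q O τ) '' Adm E O τ) :=
    ⟨0, forall_mem_image.2 fun u _ => energy_nonneg hτ u⟩
  have levels_bddBelow : BddBelow (range fun τ : Ioi (0 : ℝ) => capPhiLevel b p q τ E O) :=
    ⟨0, forall_mem_range.2 fun τ =>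
      Real.sInf_nonneg (forall_mem_image.2 fun u _ => energy_nonneg τ.2 u)⟩
  calc capPhiInf b p q E O ≤ capPhiLevel b p q t E O := ciInf_le levels_bddBelow ⟨t, ht⟩
    _ ≤ ∫ x in O, phi b p q x (gnorm (fun y => t * v y) x) / phiMinus b p q O t :=
      csInf_le (energies_bddBelow ht) (mem_image_of_mem _ (const_mul_mem_Adm hv ht.le))
    _ = ∫ x in O, phi b p q x (t * gnorm v x) / phiMinus b p q O t := by
      simp only [gnorm_const_mul, abs_of_pos ht]

theorem phi_mul_div_phiMinus_le (hb : ∀ x, 0 ≤ b x) (O : Set (En n)) {M : ℝ} {x : En n}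
    (hM : b x ≤ M) {t g : ℝ} (ht : 0 < t) (hg : 0 ≤ g) :
    phi b p q x (t * g) / phiMinus b p q O t ≤ g ^ p + M * t ^ (q - p) * g ^ q := by
  have M_nonneg : 0 ≤ M := (hb x).trans hM
  have tq_eq : t ^ q = t ^ (q - p) * t ^ p := by rw [← Real.rpow_add ht, sub_add_cancel]
  have tp_le : t ^ p ≤ phiMinus b p q O t :=
    le_add_of_nonneg_right (mul_nonneg (aInfOn_nonneg hb O) (by positivity))
  rw [div_le_iff₀ (phiMinus_pos hb O ht)]
  calc phi b p q x (t * g) = (g ^ p + b x * t ^ (q - p) * g ^ q) * t ^ p := by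
        rw [phi, Real.mul_rpow ht.le hg, Real.mul_rpow ht.le hg, tq_eq]
        ring
    _ ≤ (g ^ p + M * t ^ (q - p) * g ^ q) * phiMinus b p q O t := by gcongr

-- The normalization makes the `q`-part of the energy at level `t` vanish as `t → 0`.
theorem capPhiInf_le_setIntegral_gnorm_rpow (hO : IsOpen O) (hO_fin : volume O ≠ ∞) (hp : 0 ≤ p)
    (hpq : p < q) (hb : ∀ x, 0 ≤ b x) (hb_bdd : BddAbove (b '' O)) {v : En n → ℝ}
    (hv : v ∈ Adm E O 1) : capPhiInf b p q E O ≤ ∫ x in O, gnorm v x ^ p := by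
  obtain ⟨M, hM⟩ := hb_bdd
  obtain ⟨K, hK⟩ := hv.1
  have p_int := integrableOn_gnorm_rpow hO hO_fin (hK.mono subset_closure) hp
  have q_int := integrableOn_gnorm_rpow hO hO_fin (hK.mono subset_closure) (hp.trans hpq.le)
  have level_le {t : ℝ} (ht : 0 < t) : capPhiInf b p q E O ≤
      (∫ x in O, gnorm v x ^ p) + M * t ^ (q - p) * ∫ x in O, gnorm v x ^ q := by
    refine (capPhiInf_le_setIntegral hb hv ht).trans ?_
    rw [← integral_const_mul, ← integral_add p_int (q_int.const_mul _)]
    refine integral_mono_of_nonneg (Filter.Eventually.of_forall fun x => ?_)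
      (p_int.add (q_int.const_mul _)) ?_
    · exact div_nonneg (phi_nonneg hb x (mul_nonneg ht.le (gnorm_nonneg v x)))
        (phiMinus_pos hb O ht).le
    · filter_upwards [ae_restrict_mem hO.measurableSet] with x hx
      exact phi_mul_div_phiMinus_le hb O (hM (mem_image_of_mem b hx)) ht (gnorm_nonneg v x)
  have exponent_pos : 0 < q - p := sub_pos.2 hpq
  have q_part_tendsto : Filter.Tendsto
      (fun t : ℝ => (∫ x in O, gnorm v x ^ p) + M * t ^ (q - p) * ∫ x in O, gnorm v x ^ q)
      (nhdsWithin 0 (Ioi 0)) (nhds (∫ x in O, gnorm v x ^ p)) := by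
    have h : Continuous fun t : ℝ =>
        (∫ x in O, gnorm v x ^ p) + M * t ^ (q - p) * ∫ x in O, gnorm v x ^ q := by
      fun_prop (disch := exact exponent_pos.le)
    simpa [Real.zero_rpow exponent_pos.ne'] using
      (h.tendsto 0).mono_left (nhdsWithin_le_nhds (s := Ioi 0))
  exact ge_of_tendsto q_part_tendsto (Filter.eventually_of_mem self_mem_nhdsWithin
    fun t ht => level_le ht)

theorem capPhiInf_le_capP (hO : IsOpen O) (hO_fin : volume O ≠ ∞) (hp : 0 ≤ p) (hpq : p < q)
    (hb : ∀ x, 0 ≤ b x) (hb_bdd : BddAbove (b '' O)) (h_adm : (Adm E O 1).Nonempty) :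
    capPhiInf b p q E O ≤ capP p E O :=
  le_csInf (h_adm.image _) (forall_mem_image.2 fun _ hv =>
    capPhiInf_le_setIntegral_gnorm_rpow hO hO_fin hp hpq hb hb_bdd hv)

theorem capP_le_setIntegral {v : En n → ℝ} (hv : v ∈ Adm E O 1) :
    capP p E O ≤ ∫ x in O, gnorm v x ^ p :=
  csInf_le ⟨0, forall_mem_image.2 fun u _ => integral_nonneg fun x =>
    Real.rpow_nonneg (gnorm_nonneg u x) p⟩ (mem_image_of_mem _ hv)

end Capacity

section MazyaTest

variable {n : ℕ} {E : Set (En n)} {w : En n → ℝ} {K : ℝ≥0} {p : ℝ}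

/-- Maz'ya's test function: if `w` vanishes on `E ⊆ B̄(0,1/2)` it is admissible for the capacity of
`E` in the unit ball, and for `m` the mean value of `w` its gradient is controlled by that of `w`.
For `m = 0` the division makes it the plain cut-off `2 (1 - ‖x‖)`. -/
def mazyaTest (w : En n → ℝ) (m : ℝ) (x : En n) : ℝ := 2 * (1 - ‖x‖) * (1 - m⁻¹ * w x)

theorem mazyaTest_mem_Adm (hE : E ⊆ closedBall 0 (1 / 2)) (hw : LipschitzWith K w)
    (hwE : ∀ x ∈ E, w x = 0) (m : ℝ) : mazyaTest w m ∈ Adm E (ball 0 1) 1 := by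
  refine ⟨?_, fun x hx => ?_, fun x hx => ?_⟩
  · have product : ContDiff ℝ 1 fun z : ℝ × ℝ => 2 * (1 - z.1) * (1 - m⁻¹ * z.2) := by fun_prop
    have loc_lip : LocallyLipschitz (mazyaTest w m) := product.locallyLipschitz.comp
      (lipschitzWith_one_norm.prodMk hw).locallyLipschitz
    rw [closure_ball 0 one_ne_zero]
    exact loc_lip.locallyLipschitzOn.exists_lipschitzOnWith_of_compact (isCompact_closedBall 0 1)
  · have norm_le : ‖x‖ ≤ 1 / 2 := mem_closedBall_zero_iff.1 (hE hx)
    rw [mazyaTest, hwE x hx]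
    linarith
  · rw [frontier_ball 0 one_ne_zero, mem_sphere_zero_iff_norm] at hx
    rw [mazyaTest, hx, sub_self, mul_zero, zero_mul]

theorem abs_mul_gnorm_mazyaTest_le {m : ℝ} (hm : m ≠ 0) {x : En n} (hx : x ∈ ball (0 : En n) 1)
    (hw : DifferentiableAt ℝ w x) (h_norm : DifferentiableAt ℝ (fun y : En n => ‖y‖) x) :
    |m| * gnorm (mazyaTest w m) x ≤ 2 * (gnorm w x + |w x - m|) := by
  have norm_le_one : ‖x‖ ≤ 1 := (mem_ball_zero_iff.1 hx).le
  have cutoff_deriv := (h_norm.hasFDerivAt.const_sub 1).const_mul 2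
  have factor_deriv := (hw.hasFDerivAt.const_mul m⁻¹).const_sub 1
  have grad_norm_le : ‖fderiv ℝ (fun y : En n => ‖y‖) x‖ ≤ 1 := by
    simpa only [NNReal.coe_one] using
      norm_fderiv_le_of_lipschitz ℝ (x₀ := x) (lipschitzWith_one_norm (E := En n))
  have m_smul_grad : m • fderiv ℝ (mazyaTest w m) x =
      (2 : ℝ) • ((w x - m) • fderiv ℝ (fun y : En n => ‖y‖) x - (1 - ‖x‖) • fderiv ℝ w x) := by
    have grad_eq : fderiv ℝ (mazyaTest w m) x = _ := (cutoff_deriv.mul factor_deriv).fderiv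
    rw [grad_eq]
    match_scalars <;> field_simp
    ring
  calc |m| * gnorm (mazyaTest w m) x
      = 2 * ‖(w x - m) • fderiv ℝ (fun y : En n => ‖y‖) x - (1 - ‖x‖) • fderiv ℝ w x‖ := by
        rw [gnorm, ← Real.norm_eq_abs, ← norm_smul, m_smul_grad, norm_smul,
          Real.norm_of_nonneg zero_le_two]
    _ ≤ 2 * (|w x - m| * ‖fderiv ℝ (fun y : En n => ‖y‖) x‖ + (1 - ‖x‖) * ‖fderiv ℝ w x‖) := by
        gcongr
        refine (norm_sub_le _ _).trans_eq ?_
        rw [norm_smul, norm_smul, Real.norm_eq_abs, Real.norm_of_nonneg (by linarith)]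
    _ ≤ 2 * (|w x - m| * 1 + 1 * ‖fderiv ℝ w x‖) := by
        gcongr
        linarith [norm_nonneg x]
    _ = 2 * (gnorm w x + |w x - m|) := by
        rw [gnorm]
        ring

theorem ae_enorm_mul_enorm_gnorm_mazyaTest_le (hw : LipschitzWith K w) {m : ℝ} (hm : m ≠ 0) :
    ∀ᵐ x ∂volume.restrict (ball (0 : En n) 1),
      ‖m‖ₑ * ‖gnorm (mazyaTest w m) x‖ₑ ≤ 2 * (‖gnorm w x‖ₑ + ‖w x - m‖ₑ) := by
  filter_upwards [ae_restrict_mem measurableSet_ball, ae_restrict_of_ae hw.ae_differentiableAt,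
    ae_restrict_of_ae (lipschitzWith_one_norm (E := En n)).ae_differentiableAt] with x hx hwx hnx
  have real_le := ENNReal.ofReal_le_ofReal (abs_mul_gnorm_mazyaTest_le hm hx hwx hnx)
  rw [ENNReal.ofReal_mul (abs_nonneg _), ENNReal.ofReal_mul zero_le_two,
    ENNReal.ofReal_add (gnorm_nonneg _ _) (abs_nonneg _), ENNReal.ofReal_ofNat] at real_le
  simpa only [← Real.enorm_eq_ofReal_abs, ← Real.enorm_eq_ofReal (gnorm_nonneg _ x)] using real_le

theorem ofReal_capP_mul_enorm_rpow_le (hp : 1 ≤ p) (hE : E ⊆ closedBall 0 (1 / 2))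
    (hw : LipschitzWith K w) (hwE : ∀ x ∈ E, w x = 0) (m : ℝ) :
    ENNReal.ofReal (capP p E (ball 0 1)) * ‖m‖ₑ ^ p ≤ 2 ^ p * 2 ^ (p - 1) *
      ((∫⁻ x in ball (0 : En n) 1, ‖gnorm w x‖ₑ ^ p) +
        ∫⁻ x in ball (0 : En n) 1, ‖w x - m‖ₑ ^ p) := by
  have p_pos : 0 < p := by linarith
  rcases eq_or_ne m 0 with rfl | hm
  · rw [enorm_zero, ENNReal.zero_rpow_of_pos p_pos, mul_zero]
    exact zero_le
  have grad_meas (v : En n → ℝ) : Measurable fun x => ‖gnorm v x‖ₑ ^ p :=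
    (measurable_gnorm v).enorm.pow_const p
  have cap_le : ENNReal.ofReal (capP p E (ball 0 1)) ≤
      ∫⁻ x in ball (0 : En n) 1, ‖gnorm (mazyaTest w m) x‖ₑ ^ p := by
    refine (ENNReal.ofReal_le_ofReal
      (capP_le_setIntegral (mazyaTest_mem_Adm hE hw hwE m))).trans ?_
    rw [integral_rpow_eq_toReal_lintegral_enorm_rpow (measurable_gnorm _).aestronglyMeasurable
      (gnorm_nonneg _) p_pos.le]
    exact ENNReal.ofReal_toReal_le
  calc ENNReal.ofReal (capP p E (ball 0 1)) * ‖m‖ₑ ^ p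
      ≤ (∫⁻ x in ball (0 : En n) 1, ‖gnorm (mazyaTest w m) x‖ₑ ^ p) * ‖m‖ₑ ^ p := by gcongr
    _ = ∫⁻ x in ball (0 : En n) 1, (‖m‖ₑ * ‖gnorm (mazyaTest w m) x‖ₑ) ^ p := by
        rw [mul_comm, ← lintegral_const_mul _ (grad_meas _)]
        simp_rw [ENNReal.mul_rpow_of_nonneg _ _ p_pos.le]
    _ ≤ ∫⁻ x in ball (0 : En n) 1, 2 ^ p * 2 ^ (p - 1) *
          (‖gnorm w x‖ₑ ^ p + ‖w x - m‖ₑ ^ p) := by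
        refine lintegral_mono_ae ?_
        filter_upwards [ae_enorm_mul_enorm_gnorm_mazyaTest_le hw hm] with x hx
        refine (ENNReal.rpow_le_rpow hx p_pos.le).trans ?_
        rw [ENNReal.mul_rpow_of_nonneg _ _ p_pos.le, mul_assoc]
        gcongr
        exact ENNReal.rpow_add_le_mul_rpow_add_rpow _ _ hp
    _ = 2 ^ p * 2 ^ (p - 1) * ((∫⁻ x in ball (0 : En n) 1, ‖gnorm w x‖ₑ ^ p) +
          ∫⁻ x in ball (0 : En n) 1, ‖w x - m‖ₑ ^ p) := by
        rw [lintegral_const_mul' _ _ (by finiteness), lintegral_add_left (grad_meas w)]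

theorem LocUnifPhiFat.locUnifPFat {a : En n → ℝ} {q cfat ro : ℝ} (ha : ∀ x, 0 ≤ a x)
    (ha_cont : Continuous a) (hp : 0 ≤ p) (hpq : p < q) (h : LocUnifPhiFat a p q E cfat ro) :
    LocUnifPFat p E cfat ro := by
  intro z hz r hr hrro
  have shifted_subset : shiftedSet E z r ⊆ closedBall 0 (1 / 2) := fun x hx => hx.1
  have zero_test := mazyaTest_mem_Adm shifted_subset (LipschitzWith.const 0) (fun _ _ => rfl) 0
  have shifted_cont : Continuous fun x => a (z + r • x) := by fun_prop
  have shifted_bdd : BddAbove ((fun x => a (z + r • x)) '' ball 0 1) :=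
    ((isCompact_closedBall 0 1).bddAbove_image shifted_cont.continuousOn).mono
      (image_mono ball_subset_closedBall)
  exact (h z hz r hr hrro).trans (capPhiInf_le_capP isOpen_ball measure_ball_lt_top.ne hp hpq
    (fun x => ha (z + r • x)) shifted_bdd ⟨_, zero_test⟩)

end MazyaTest

section Mazya

variable {p s c : ℝ}

theorem exists_sobolev_poincare_unitBall (n : ℕ) (hp : 1 ≤ p) (hps : p ≤ s)
    (hs : n * (s / p - 1) < s) :
    ∃ C ≠ ∞, ∀ w : En n → ℝ, (∃ K, LipschitzWith K w) →
      ∫⁻ x in ball (0 : En n) 1, ‖w x - ⨍ y in ball (0 : En n) 1, w y‖ₑ ^ s ≤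
        C * (∫⁻ x in ball (0 : En n) 1, ‖gnorm w x‖ₑ ^ p) ^ (s / p) := by
  simp only [gnorm, enorm_norm]
  exact exists_setLIntegral_enorm_sub_setAverage_rpow_le (convex_ball 0 1) measurableSet_ball
    isBounded_ball (measure_ball_pos volume _ one_pos).ne' hp hps
    (by rwa [finrank_euclideanSpace_fin])

theorem exists_enorm_setAverage_rpow_le_of_le_capP (n : ℕ) (hp : 1 ≤ p) (hc : 0 < c) :
    ∃ D ≠ ∞, ∀ (E : Set (En n)) (w : En n → ℝ), E ⊆ closedBall 0 (1 / 2) →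
      c ≤ capP p E (ball 0 1) → (∃ K, LipschitzWith K w) → (∀ x ∈ E, w x = 0) →
      ‖⨍ y in ball (0 : En n) 1, w y‖ₑ ^ p ≤
        D * ∫⁻ x in ball (0 : En n) 1, ‖gnorm w x‖ₑ ^ p := by
  have p_pos : 0 < p := by linarith
  obtain ⟨C, C_ne_top, poincare⟩ := exists_sobolev_poincare_unitBall n hp le_rfl
    (by rwa [div_self p_pos.ne', sub_self, mul_zero])
  rw [div_self p_pos.ne'] at poincare
  simp only [ENNReal.rpow_one] at poincare
  have c_inv_ne_top : (ENNReal.ofReal c)⁻¹ ≠ ∞ := ENNReal.inv_ne_top.2 (ENNReal.ofReal_pos.2 hc).ne'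
  refine ⟨(ENNReal.ofReal c)⁻¹ * (2 ^ p * 2 ^ (p - 1) * (1 + C)), by finiteness,
    fun E w hE hcap hw hwE => ?_⟩
  have ⟨K, hK⟩ := hw
  set m := ⨍ y in ball (0 : En n) 1, w y
  rw [mul_assoc, ← ENNReal.div_eq_inv_mul, ENNReal.le_div_iff_mul_le
    (Or.inl (ENNReal.ofReal_pos.2 hc).ne') (Or.inl ENNReal.ofReal_ne_top)]
  calc ‖m‖ₑ ^ p * ENNReal.ofReal c
      ≤ ENNReal.ofReal (capP p E (ball 0 1)) * ‖m‖ₑ ^ p := by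
        rw [mul_comm]
        gcongr
    _ ≤ _ := ofReal_capP_mul_enorm_rpow_le hp hE hK hwE m
    _ ≤ 2 ^ p * 2 ^ (p - 1) * ((∫⁻ x in ball (0 : En n) 1, ‖gnorm w x‖ₑ ^ p) +
          C * ∫⁻ x in ball (0 : En n) 1, ‖gnorm w x‖ₑ ^ p) := by
        gcongr
        exact poincare w hw
    _ = 2 ^ p * 2 ^ (p - 1) * (1 + C) * ∫⁻ x in ball (0 : En n) 1, ‖gnorm w x‖ₑ ^ p := by ring

theorem exists_lintegral_enorm_rpow_le_of_le_capP (n : ℕ) (hp : 1 ≤ p) (hps : p ≤ s)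
    (hs : n * (s / p - 1) < s) (hc : 0 < c) :
    ∃ C ≠ ∞, ∀ (E : Set (En n)) (w : En n → ℝ), E ⊆ closedBall 0 (1 / 2) →
      c ≤ capP p E (ball 0 1) → (∃ K, LipschitzWith K w) → (∀ x ∈ E, w x = 0) →
      ∫⁻ x in ball (0 : En n) 1, ‖w x‖ₑ ^ s ≤
        C * (∫⁻ x in ball (0 : En n) 1, ‖gnorm w x‖ₑ ^ p) ^ (s / p) := by
  have p_pos : 0 < p := by linarith
  have s_nonneg : 0 ≤ s := by linarith
  have ratio_nonneg : 0 ≤ s / p := by positivity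
  obtain ⟨C, C_ne_top, poincare⟩ := exists_sobolev_poincare_unitBall n hp hps hs
  obtain ⟨D, D_ne_top, mean_le⟩ := exists_enorm_setAverage_rpow_le_of_le_capP n hp hc
  set V := volume (ball (0 : En n) 1)
  have V_ne_top : V ≠ ∞ := measure_ball_lt_top.ne
  refine ⟨2 ^ (s - 1) * (C + D ^ (s / p) * V), by finiteness, fun E w hE hcap hw hwE => ?_⟩
  have ⟨K, hK⟩ := hw
  set m := ⨍ y in ball (0 : En n) 1, w y
  set N := ∫⁻ x in ball (0 : En n) 1, ‖gnorm w x‖ₑ ^ p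
  have mean_rpow_le : ‖m‖ₑ ^ s ≤ D ^ (s / p) * N ^ (s / p) := by
    rw [← ENNReal.mul_rpow_of_nonneg _ _ ratio_nonneg, ← mul_div_cancel₀ s p_pos.ne',
      ENNReal.rpow_mul, mul_div_cancel₀ s p_pos.ne']
    gcongr
    exact mean_le E w hE hcap hw hwE
  have oscillation_meas : Measurable fun x => ‖w x - m‖ₑ ^ s :=
    ((hK.continuous.measurable.sub_const m).enorm).pow_const s
  calc ∫⁻ x in ball (0 : En n) 1, ‖w x‖ₑ ^ s
      ≤ ∫⁻ x in ball (0 : En n) 1, 2 ^ (s - 1) * (‖w x - m‖ₑ ^ s + ‖m‖ₑ ^ s) := by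
        refine lintegral_mono fun x => ?_
        have split : ‖w x‖ₑ ≤ ‖w x - m‖ₑ + ‖m‖ₑ := by simpa using enorm_add_le (w x - m) m
        exact (ENNReal.rpow_le_rpow split s_nonneg).trans
          (ENNReal.rpow_add_le_mul_rpow_add_rpow _ _ (hp.trans hps))
    _ = 2 ^ (s - 1) * ((∫⁻ x in ball (0 : En n) 1, ‖w x - m‖ₑ ^ s) + ‖m‖ₑ ^ s * V) := by
        rw [lintegral_const_mul' _ _ (by finiteness), lintegral_add_left oscillation_meas,
          setLIntegral_const]
    _ ≤ 2 ^ (s - 1) * (C * N ^ (s / p) + D ^ (s / p) * N ^ (s / p) * V) := by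
        gcongr
        exact poincare w hw
    _ = 2 ^ (s - 1) * (C + D ^ (s / p) * V) * N ^ (s / p) := by ring

theorem exists_setIntegral_abs_rpow_le_of_le_capP (n : ℕ) (hp : 1 ≤ p) (hps : p ≤ s)
    (hs : n * (s / p - 1) < s) (hc : 0 < c) :
    ∃ C, 0 ≤ C ∧ ∀ (E : Set (En n)) (w : En n → ℝ), E ⊆ closedBall 0 (1 / 2) →
      c ≤ capP p E (ball 0 1) → (∃ K, LipschitzWith K w) → (∀ x ∈ E, w x = 0) →
      ∫ x in ball (0 : En n) 1, |w x| ^ s ≤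
        C * (∫ x in ball (0 : En n) 1, gnorm w x ^ p) ^ (s / p) := by
  have p_nonneg : 0 ≤ p := by linarith
  have ratio_nonneg : 0 ≤ s / p := div_nonneg (p_nonneg.trans hps) p_nonneg
  obtain ⟨C, C_ne_top, mazya⟩ := exists_lintegral_enorm_rpow_le_of_le_capP n hp hps hs hc
  refine ⟨C.toReal, ENNReal.toReal_nonneg, fun E w hE hcap hw hwE => ?_⟩
  have ⟨K, hK⟩ := hw
  have grad_int := integrableOn_gnorm_rpow isOpen_ball measure_ball_lt_top.ne
    (hK.lipschitzOnWith (s := ball (0 : En n) 1)) p_nonneg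
  have energy_ne_top : ∫⁻ x in ball (0 : En n) 1, ‖gnorm w x‖ₑ ^ p ≠ ∞ := by
    simpa only [Real.enorm_rpow_of_nonneg (gnorm_nonneg w _) p_nonneg] using
      grad_int.hasFiniteIntegral.ne
  rw [integral_rpow_eq_toReal_lintegral_enorm_rpow (f := fun x => |w x|)
      hK.continuous.abs.aestronglyMeasurable (fun x => abs_nonneg (w x)) (p_nonneg.trans hps),
    integral_rpow_eq_toReal_lintegral_enorm_rpow (measurable_gnorm w).aestronglyMeasurable
      (gnorm_nonneg w) p_nonneg, ENNReal.toReal_rpow, ← ENNReal.toReal_mul]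
  simp only [Real.enorm_abs]
  exact ENNReal.toReal_mono (by finiteness) (mazya E w hE hcap hw hwE)

end Mazya

section Scaling

variable {V F : Type*} [NormedAddCommGroup V] [NormedSpace ℝ V] [FiniteDimensional ℝ V]
  [MeasurableSpace V] [BorelSpace V] (μ : Measure V) [μ.IsAddHaarMeasure]
  [NormedAddCommGroup F] [NormedSpace ℝ F] {r : ℝ}

theorem setIntegral_ball_eq_smul_setIntegral_unitBall (z : V) (hr : 0 < r) (f : V → F) :
    ∫ x in ball z r, f x ∂μ =
      r ^ Module.finrank ℝ V • ∫ x in ball (0 : V) 1, f (z + r • x) ∂μ := by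
  have translate := (measurePreserving_add_left μ z).setIntegral_preimage_emb
    (measurableEmbedding_addLeft z) f (ball z r)
  rw [preimage_add_ball, sub_self] at translate
  rw [Measure.setIntegral_comp_smul_of_pos μ (fun y => f (z + y)) _ hr, smul_unitBall_of_pos hr,
    smul_inv_smul₀ (by positivity), translate]

theorem setAverage_ball_eq_setAverage_unitBall (z : V) (hr : 0 < r) (f : V → F) :
    ⨍ x in ball z r, f x ∂μ = ⨍ x in ball (0 : V) 1, f (z + r • x) ∂μ := by
  have volume_scale : μ.real (ball z r) = r ^ Module.finrank ℝ V * μ.real (ball 0 1) := by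
    rw [Measure.real, Measure.addHaar_ball_of_pos μ z hr, ENNReal.toReal_mul,
      ENNReal.toReal_ofReal (by positivity), Measure.real]
  rw [setAverage_eq, setAverage_eq, setIntegral_ball_eq_smul_setIntegral_unitBall μ z hr,
    volume_scale, mul_inv_rev, mul_smul, inv_smul_smul₀ (by positivity)]

end Scaling

theorem gnorm_comp_add_smul {n : ℕ} (u : En n → ℝ) (z : En n) (r : ℝ) (x : En n) :
    gnorm (fun y => u (z + r • y)) x = |r| * gnorm u (z + r • x) := by
  rw [gnorm, fderiv_comp_smul (f := fun y => u (z + y)), fderiv_comp_add_left, norm_smul,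
    Real.norm_eq_abs, gnorm]

section Hoelder

variable {X : Type*} [PseudoMetricSpace X] {a : X → ℝ} {A α : ℝ}

theorem continuous_of_abs_sub_le_mul_dist_rpow (hα : 0 < α)
    (h : ∀ x y, |a x - a y| ≤ A * dist x y ^ α) : Continuous a := by
  refine continuous_iff_continuousAt.2 fun x => tendsto_iff_dist_tendsto_zero.2
    (squeeze_zero (fun _ => dist_nonneg) (fun y => h y x) ?_)
  have modulus_cont : Continuous fun y => A * dist y x ^ α := by
    fun_prop (disch := exact hα.le)
  simpa [Real.zero_rpow hα.ne'] using modulus_cont.tendsto x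

theorem le_sInf_image_ball_add_of_abs_sub_le (hα : 0 ≤ α) (hA : 0 ≤ A)
    (h : ∀ x y, |a x - a y| ≤ A * dist x y ^ α) {z x : X} {r : ℝ} (hx : x ∈ ball z r) :
    a x ≤ sInf (a '' ball z r) + A * (2 * r) ^ α := by
  rw [← sub_le_iff_le_add]
  refine le_csInf ⟨a x, x, hx, rfl⟩ (forall_mem_image.2 fun y hy => ?_)
  have dist_le : dist x y ≤ 2 * r := by
    linarith [dist_triangle_right x y z, mem_ball.1 hx, mem_ball.1 hy]
  have modulus_le : A * dist x y ^ α ≤ A * (2 * r) ^ α := by gcongr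
  linarith [le_abs_self (a x - a y), h x y]

end Hoelder

section PPhase

variable {n : ℕ} {p q α A r : ℝ}

theorem le_three_mul_of_aInfOn_ball_le {a : En n → ℝ} {z x : En n} (hα : 0 ≤ α) (hα1 : α ≤ 1)
    (hA : 0 ≤ A) (h : ∀ x y, |a x - a y| ≤ A * dist x y ^ α)
    (hphase : aInfOn a (ball z r) ≤ A * r ^ α) (hx : x ∈ ball z r) : a x ≤ 3 * (A * r ^ α) := by
  have hr : 0 < r := pos_of_mem_ball hx
  have two_rpow_le : (2 : ℝ) ^ α ≤ 2 := by
    simpa using Real.rpow_le_rpow_of_exponent_le one_le_two hα1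
  calc a x ≤ aInfOn a (ball z r) + A * (2 * r) ^ α :=
        le_sInf_image_ball_add_of_abs_sub_le hα hA h hx
    _ ≤ A * r ^ α + A * (2 * r ^ α) := by
        rw [Real.mul_rpow zero_le_two hr.le]
        gcongr
    _ = 3 * (A * r ^ α) := by ring

theorem natCast_mul_div_sub_one_le (hn : 0 < n) (h : q / p ≤ 1 + α / n) :
    n * (q / p - 1) ≤ α := by
  have hn' : (0 : ℝ) < n := by exact_mod_cast hn
  rwa [← sub_le_iff_le_add', le_div_iff₀' hn'] at h

theorem natCast_mul_div_sub_one_lt (hp : 1 ≤ p) (hpq : p ≤ q) (hα : α ≤ 1)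
    (h : n * (q / p - 1) ≤ α) : n * (q / p - 1) < q := by
  rcases hpq.eq_or_lt with rfl | hpq
  · rw [div_self (by positivity), sub_self, mul_zero]
    positivity
  · linarith

theorem rpow_mul_rpow_div_le {N : ℝ} (hp : 0 < p) (hq : 0 < q) (h : n * (q / p - 1) ≤ α)
    (hr : 0 < r) (hr1 : r ≤ 1) (hN : 0 ≤ N) :
    r ^ α * N ^ (q / p) ≤ ((r ^ n * N) ^ (1 / p)) ^ (q - p) * N := by
  rcases hN.eq_or_lt with rfl | hN
  · rw [Real.zero_rpow (by positivity), mul_zero, mul_zero]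
  have exponent_eq : 1 / p * (q - p) = q / p - 1 := by field_simp
  calc r ^ α * N ^ (q / p) ≤ r ^ (n * (q / p - 1)) * N ^ (q / p) := by
        gcongr ?_ * _
        exact Real.rpow_le_rpow_of_exponent_ge hr hr1 h
    _ = (r ^ n * N) ^ (q / p - 1) * N := by
        rw [Real.mul_rpow (by positivity) hN.le, mul_assoc, ← Real.rpow_add_one hN.ne',
          sub_add_cancel, Real.rpow_mul hr.le, Real.rpow_natCast]
    _ = ((r ^ n * N) ^ (1 / p)) ^ (q - p) * N := by
        rw [← Real.rpow_mul (by positivity), exponent_eq]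

theorem add_three_mul_rpow_div_le {N : ℝ} (hp : 0 < p) (hq : 0 < q) (h : n * (q / p - 1) ≤ α)
    (hr : 0 < r) (hr1 : r ≤ 1) (hA : 0 ≤ A) (hN : 0 ≤ N) :
    N + 3 * (A * r ^ α) * N ^ (q / p) ≤
      3 * (1 + A * ((r ^ n * N) ^ (1 / p)) ^ (q - p)) * N := by
  have absorb := mul_le_mul_of_nonneg_left (rpow_mul_rpow_div_le hp hq h hr hr1 hN) hA
  linear_combination 2 * hN + 3 * absorb

theorem setIntegral_phi_abs_le {b w : En n → ℝ} {M : ℝ} (hp : 0 ≤ p) (hq : 0 ≤ q)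
    (hb : Continuous b) (hw : Continuous w) (hM : ∀ x ∈ ball 0 1, b x ≤ M) :
    ∫ x in ball (0 : En n) 1, phi b p q x |w x| ≤
      (∫ x in ball (0 : En n) 1, |w x| ^ p) + M * ∫ x in ball (0 : En n) 1, |w x| ^ q := by
  have integrable_of_cont {f : En n → ℝ} (hf : Continuous f) : IntegrableOn f (ball 0 1) :=
    (hf.continuousOn.integrableOn_compact (isCompact_closedBall 0 1)).mono_set
      ball_subset_closedBall
  have p_cont : Continuous fun x => |w x| ^ p := by fun_prop (disch := assumption)
  have q_cont : Continuous fun x => |w x| ^ q := by fun_prop (disch := assumption)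
  rw [← integral_const_mul, ← integral_add (integrable_of_cont p_cont)
    ((integrable_of_cont q_cont).const_mul M)]
  refine setIntegral_mono_on (integrable_of_cont (p_cont.add (hb.mul q_cont)))
    (integrable_of_cont (p_cont.add (q_cont.const_mul M))) measurableSet_ball fun x hx => ?_
  rw [phi]
  gcongr
  exact hM x hx

theorem exists_setIntegral_phi_abs_le_of_le_capP (n : ℕ) {c : ℝ} (hp : 1 ≤ p) (hpq : p ≤ q)
    (hq : n * (q / p - 1) < q) (hc : 0 < c) :
    ∃ C, 0 ≤ C ∧ ∀ (E : Set (En n)) (b w : En n → ℝ) (M : ℝ), E ⊆ closedBall 0 (1 / 2) →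
      c ≤ capP p E (ball 0 1) → Continuous b → (∀ x ∈ ball 0 1, b x ≤ M) → 0 ≤ M →
      (∃ K, LipschitzWith K w) → (∀ x ∈ E, w x = 0) →
      ∫ x in ball (0 : En n) 1, phi b p q x |w x| ≤
        C * ((∫ x in ball (0 : En n) 1, gnorm w x ^ p) +
          M * (∫ x in ball (0 : En n) 1, gnorm w x ^ p) ^ (q / p)) := by
  have p_pos : 0 < p := by linarith
  obtain ⟨Cp, Cp_nonneg, mazya_p⟩ := exists_setIntegral_abs_rpow_le_of_le_capP n hp le_rfl
    (by rwa [div_self p_pos.ne', sub_self, mul_zero]) hc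
  obtain ⟨Cq, Cq_nonneg, mazya_q⟩ := exists_setIntegral_abs_rpow_le_of_le_capP n hp hpq hq hc
  refine ⟨Cp + Cq, by positivity, fun E b w M hE hcap hb hbM hM hw hwE => ?_⟩
  have ⟨K, hK⟩ := hw
  have p_le := mazya_p E w hE hcap hw hwE
  rw [div_self p_pos.ne', Real.rpow_one] at p_le
  set N := ∫ x in ball (0 : En n) 1, gnorm w x ^ p
  have N_nonneg : 0 ≤ N := integral_nonneg fun x => Real.rpow_nonneg (gnorm_nonneg w x) p
  calc ∫ x in ball (0 : En n) 1, phi b p q x |w x|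
      ≤ (∫ x in ball (0 : En n) 1, |w x| ^ p) + M * ∫ x in ball (0 : En n) 1, |w x| ^ q :=
        setIntegral_phi_abs_le p_pos.le (p_pos.le.trans hpq) hb hK.continuous hbM
    _ ≤ Cp * N + M * (Cq * N ^ (q / p)) := by
        gcongr
        exact mazya_q E w hE hcap hw hwE
    _ ≤ (Cp + Cq) * N + M * ((Cp + Cq) * N ^ (q / p)) := by
        gcongr <;> linarith
    _ = (Cp + Cq) * (N + M * N ^ (q / p)) := by ring

theorem p_phase_boundary_poincare_general (n : ℕ) (hn : 0 < n) (p q cfat : ℝ) (hp : 1 ≤ p)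
    (hpq : p ≤ q) (hcfat : 0 < cfat) :
    ∃ c : ℝ, 0 < c ∧
      ∀ (α A r : ℝ) (a : En n → ℝ) (E : Set (En n)) (z : En n),
        0 < α → α ≤ 1 → 0 ≤ A →
        (∀ x y, |a x - a y| ≤ A * dist x y ^ α) →
        q / p ≤ 1 + α / n →
        0 < r → r ≤ 1 →
        cfat ≤ capP p (shiftedSet E z r) (ball 0 1) →
        aInfOn a (ball z r) ≤ A * r ^ α →
        ∀ u : En n → ℝ, (∃ K, LipschitzWith K u) → (∀ x ∈ E, u x = 0) →
          (⨍ x in ball z r, phi a p q x |u x|) ≤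
            c * (1 + A *
                  ((∫ x in ball z r, (r * gnorm u x) ^ p) ^ (1 / p)) ^ (q - p)) *
              (⨍ x in ball z r, (r * gnorm u x) ^ p) := by
  by_cases hq : n * (q / p - 1) < q
  swap
  · exact ⟨1, one_pos, fun α A r a E z _ hα1 _ _ hpqα => absurd
      (natCast_mul_div_sub_one_lt hp hpq hα1 (natCast_mul_div_sub_one_le hn hpqα)) hq⟩
  obtain ⟨C, C_nonneg, mazya⟩ := exists_setIntegral_phi_abs_le_of_le_capP n hp hpq hq hcfat
  refine ⟨3 * C + 1, by positivity, fun α A r a E z hα hα1 hA ha hpqα hr hr1 hcap hphase u hu hE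
    => ?_⟩
  obtain ⟨K, hK⟩ := hu
  have a_cont := continuous_of_abs_sub_le_mul_dist_rpow hα ha
  have a_le : ∀ x ∈ ball (0 : En n) 1, a (z + r • x) ≤ 3 * (A * r ^ α) := fun x hx =>
    le_three_mul_of_aInfOn_ball_le hα.le hα1 hA ha hphase <| by
      simpa [norm_smul, abs_of_pos hr, hr] using hx
  have unit_le := mazya (shiftedSet E z r) (fun x => a (z + r • x)) (fun x => u (z + r • x))
    (3 * (A * r ^ α)) (fun x hx => hx.1) hcap (by fun_prop) a_le (by positivity)
    ⟨_, hK.comp ((LipschitzWith.const z).add (lipschitzWith_smul r))⟩ fun x hx => hE _ hx.2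
  simp only [gnorm_comp_add_smul, abs_of_pos hr] at unit_le
  rw [setAverage_ball_eq_setAverage_unitBall volume z hr,
    setAverage_ball_eq_setAverage_unitBall volume z hr,
    setIntegral_ball_eq_smul_setIntegral_unitBall volume z hr, finrank_euclideanSpace_fin,
    smul_eq_mul, setAverage_eq, setAverage_eq, smul_eq_mul, smul_eq_mul, mul_left_comm]
  set N := ∫ x in ball (0 : En n) 1, (r * gnorm u (z + r • x)) ^ p
  have N_nonneg : 0 ≤ N := integral_nonneg fun x =>
    Real.rpow_nonneg (mul_nonneg hr.le (gnorm_nonneg u _)) p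
  have absorb := add_three_mul_rpow_div_le (by linarith) (by linarith)
    (natCast_mul_div_sub_one_le hn hpqα) hr hr1 hA N_nonneg
  set T := ((r ^ n * N) ^ (1 / p)) ^ (q - p)
  gcongr
  calc ∫ x in ball (0 : En n) 1, phi a p q (z + r • x) |u (z + r • x)|
      ≤ C * (3 * (1 + A * T) * N) := unit_le.trans (by gcongr)
    _ = 3 * C * (1 + A * T) * N := by ring
    _ ≤ (3 * C + 1) * (1 + A * T) * N := by
        gcongr
        linarith

end PPhase

/-- **Boundary Poincaré inequality in the `p`-phase** (Remark 7.1): if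
`ℝⁿ ∖ Ω` is locally uniformly infimally `φ`-fat and the ball `B(z,r)` is in the
`p`-phase, i.e. `inf_{B(z,r)} a ≤ [a]_{0,α} r^α`, then
`⨍_{B(z,r)} φ(x,|u|) ≤ c (1 + [a]_{0,α} ‖r∇u‖_{L^p(B(z,r))}^{q-p}) ⨍_{B(z,r)} |r∇u|^p`. -/
theorem p_phase_boundary_poincare
    (n : ℕ) (hn : 0 < n) (p q cfat : ℝ)
    (hp : 1 < p) (hpq : p < q) (hcfat : 0 < cfat) :
    ∃ c : ℝ, 0 < c ∧
      ∀ (α A ro : ℝ) (a : En n → ℝ) (Ω : Set (En n)),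
        0 < α → α ≤ 1 → (∀ x, 0 ≤ a x) → 0 ≤ A →
        (∀ x y, |a x - a y| ≤ A * dist x y ^ α) →
        q / p ≤ 1 + α / n →
        IsOpen Ω → 0 < ro → ro ≤ 1 →
        LocUnifPhiFat a p q Ωᶜ cfat ro →
        ∀ z ∈ Ωᶜ, ∀ r : ℝ, 0 < r → r < ro →
          aInfOn a (ball z r) ≤ A * r ^ α →
          ∀ u ∈ Lip0 Ω,
            (⨍ x in ball z r, phi a p q x |u x|) ≤
              c * (1 + A *
                    ((∫ x in ball z r, (r * gnorm u x) ^ p) ^ (1 / p)) ^ (q - p)) *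
                (⨍ x in ball z r, (r * gnorm u x) ^ p) := by
  obtain ⟨c, c_pos, poincare⟩ :=
    p_phase_boundary_poincare_general n hn p q cfat hp.le hpq.le hcfat
  refine ⟨c, c_pos, fun α A ro a Ω hα hα1 ha hA ha_hoelder hpqα _ _ hro hfat z hz r hr hrro hphase
    u hu => ?_⟩
  have p_fat := hfat.locUnifPFat ha (continuous_of_abs_sub_le_mul_dist_rpow hα ha_hoelder)
    (by linarith) hpq
  exact poincare α A r a Ωᶜ z hα hα1 hA ha_hoelder hpqα hr (hrro.le.trans hro)
    (p_fat z hz r hr hrro) hphase u hu.1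
    fun x hx => image_eq_zero_of_notMem_tsupport fun hx' => hx (hu.2.2 hx')
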